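/- For a finite group G, S(G) = |G| if and only if G is a ZM-group, i.e., all Sylow subgroups of G are cyclic. -/

import Mathlib

/-- `phiG G` is the number of elements of `G` whose order equals the exponent of `G`. -/
noncomputable def phiG (G : Type*) [Group G] : ℕ :=
  Nat.card {a : G // orderOf a = Monoid.exponent G}

/-- `SG G` is the sum of `phiG H` over all subgroups `H` of `G`. -/
noncomputable def SG (G : Type*) [Group G] : ℕ :=
  ∑ᶠ H : Subgroup G, phiG H

/-!
`S(G)` counts the pairs `(H, a)` with `a ∈ H` and `o(a) = exp(H)`. Every `a ∈ G` occurs in the pair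
`(⟨a⟩, a)`, so `S(G) ≥ |G|`, with equality iff `(H, a) ↦ a` is injective, i.e. iff `H = ⟨a⟩` in
every such pair. A Sylow subgroup `P` contains an element of order `exp(P)`, so in the case of
equality it is cyclic. Conversely, every subgroup `H` of a ZM-group has exponent `|H|`, so an
element of order `exp(H)` generates `H`.
-/

section Exponent

theorem exists_orderOf_eq_exponent_of_exponent_eq_prime_pow {M : Type*} [Monoid M] {p n : ℕ}
    (hp : p.Prime) (h : Monoid.exponent M = p ^ n) : ∃ a : M, orderOf a = Monoid.exponent M := by
  obtain ⟨a, ha⟩ := hp.exists_orderOf_eq_pow_factorization_exponent M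
  exact ⟨a, by rw [ha, h, hp.factorization_pow, Finsupp.single_eq_same]⟩

variable {G : Type*} [Group G]

theorem exponent_zpowers (a : G) : Monoid.exponent (Subgroup.zpowers a) = orderOf a := by
  rw [IsCyclic.exponent_eq_card, Nat.card_zpowers]

theorem zpowers_eq_of_orderOf_eq_exponent {H : Subgroup G} [Finite H] [IsZGroup H] {a : G}
    (haH : a ∈ H) (ha : orderOf a = Monoid.exponent H) : Subgroup.zpowers a = H := by
  refine Subgroup.eq_of_le_of_card_ge (Subgroup.zpowers_le_of_mem haH) ?_
  rw [Nat.card_zpowers, ha, IsZGroup.exponent_eq_card]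

theorem isZGroup_iff_zpowers_eq_of_orderOf_eq_exponent [Finite G] :
    IsZGroup G ↔ ∀ H : Subgroup G, ∀ a ∈ H,
      orderOf a = Monoid.exponent H → Subgroup.zpowers a = H := by
  refine ⟨fun _ H a haH ha ↦ zpowers_eq_of_orderOf_eq_exponent haH ha, fun h ↦ ⟨fun p hp P ↦ ?_⟩⟩
  have : Fact p.Prime := ⟨hp⟩
  obtain ⟨n, hn⟩ := isPGroup_iff_exponent_eq_pow.mp P.isPGroup'
  obtain ⟨a, ha⟩ := exists_orderOf_eq_exponent_of_exponent_eq_prime_pow hp hn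
  have hP : Subgroup.zpowers (a : G) = P := h P a a.2 ((Subgroup.orderOf_coe a).trans ha)
  exact hP ▸ Subgroup.isCyclic_zpowers (a : G)

end Exponent

/-- The pairs `(H, a)` counted by `SG G`: a subgroup `H` together with an element `a ∈ H` of order
`exp(H)`. The element is taken in `G` rather than in the type `H`, so that two pairs agree as soon
as their components do, without transport along an equality of subgroups. -/
abbrev ExponentPair (G : Type*) [Group G] : Type _ :=
  Σ H : Subgroup G, {a : G // a ∈ H ∧ orderOf a = Monoid.exponent H}

namespace ExponentPair

variable {G : Type*} [Group G]

/-- The second component `a` of a pair `(H, a)`. -/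
def element (x : ExponentPair G) : G :=
  x.2

/-- The pair `(⟨a⟩, a)`, through which every `a ∈ G` contributes to `SG G`. -/
def ofElement (a : G) : ExponentPair G :=
  ⟨Subgroup.zpowers a, a, Subgroup.mem_zpowers a, (exponent_zpowers a).symm⟩

theorem element_surjective : Function.Surjective (element (G := G)) := fun a ↦ ⟨ofElement a, rfl⟩

theorem element_injective_iff : Function.Injective (element (G := G)) ↔
    ∀ H : Subgroup G, ∀ a ∈ H, orderOf a = Monoid.exponent H → Subgroup.zpowers a = H := by
  constructor
  · intro hinj H a haH ha
    have hpair : ofElement a = ⟨H, a, haH, ha⟩ := hinj rfl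
    exact congrArg Sigma.fst hpair
  · rintro h ⟨H, a, haH, ha⟩ ⟨K, b, hbK, hb⟩ (rfl : a = b)
    exact Sigma.subtype_ext ((h H a haH ha).symm.trans (h K a hbK hb)) rfl

end ExponentPair

section Counting

variable {G : Type*} [Group G]

theorem phiG_subgroup_eq_card (H : Subgroup G) :
    phiG H = Nat.card {a : G // a ∈ H ∧ orderOf a = Monoid.exponent H} := by
  simp only [phiG, ← Subgroup.orderOf_coe]
  exact Nat.card_congr
    (Equiv.subtypeSubtypeEquivSubtypeInter (· ∈ H) (orderOf · = Monoid.exponent H))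

variable [Finite G]

theorem SG_eq_card_exponentPair : SG G = Nat.card (ExponentPair G) := by
  have : Fintype (Subgroup G) := Fintype.ofFinite _
  simp only [SG, finsum_eq_sum_of_fintype, phiG_subgroup_eq_card, Nat.card_sigma]

theorem SG_eq_card_iff_element_injective :
    SG G = Nat.card G ↔ Function.Injective (ExponentPair.element (G := G)) := by
  rw [SG_eq_card_exponentPair]
  refine ⟨fun h ↦ ?_, fun h ↦ Nat.card_eq_of_bijective _ ⟨h, ExponentPair.element_surjective⟩⟩
  exact ((Nat.bijective_iff_surjective_and_card _).mpr ⟨ExponentPair.element_surjective, h⟩).1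

end Counting

theorem S_eq_card_iff_ZM (G : Type*) [Group G] [Fintype G] :
    SG G = Nat.card G ↔ ∀ (p : ℕ), p.Prime → ∀ P : Sylow p G, IsCyclic P := by
  rw [SG_eq_card_iff_element_injective, ExponentPair.element_injective_iff,
    ← isZGroup_iff_zpowers_eq_of_orderOf_eq_exponent, isZGroup_iff]
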